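/- Let Q ⪰ 0 be such that 𝒮[Q] ≻ 0, and let σ_Q := { t ∈ ℝ : there exists v ≠ 0 with Q v = t·𝒮[Q] v } be the generalized spectrum of the pencil (Q, 𝒮[Q]). Then σ_Q is a nonempty finite set of real numbers and P satisfies min σ_Q ≤ P ≤ max σ_Q (in particular P is finite). -/

import Mathlib

open Matrix ComplexOrder ENNReal

noncomputable section

abbrev Mat (N : ℕ) := Matrix (Fin N) (Fin N) ℂ

/-- Real quadratic form `v* A v` (real part). -/
def qf {N : ℕ} (A : Mat N) (v : Fin N → ℂ) : ℝ := (star v ⬝ᵥ A *ᵥ v).re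

/-- The congruence map `Q ↦ Lᴴ Q L`. -/
def conjBy {N : ℕ} (L : Mat N) : Mat N →ₗ[ℂ] Mat N where
  toFun Q := Lᴴ * Q * L
  map_add' Q Q' := by simp [Matrix.mul_add, Matrix.add_mul]
  map_smul' a Q := by simp [Matrix.mul_smul, Matrix.smul_mul]

/-- The operator `𝒮[Q] = 𝒱[(L⁻¹)ᴴ Q L⁻¹]`. -/
def Smap {N : ℕ} (L : Mat N) (V : Mat N →ₗ[ℂ] Mat N) : Module.End ℂ (Mat N) :=
  V ∘ₗ conjBy L⁻¹

/-- `P := sup_{Q ≻ 0} inf_{v ≠ 0} (v* L* Q L v)/(v* 𝒱[Q] v)`, valued in `[0,∞]`,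
with the convention that a ratio with zero denominator and positive numerator is `∞`. -/
def Pval {N : ℕ} (L : Mat N) (V : Mat N →ₗ[ℂ] Mat N) : ℝ≥0∞ :=
  ⨆ Q : {Q : Mat N // Q.PosDef}, ⨅ v : {v : Fin N → ℂ // v ≠ 0},
    ENNReal.ofReal (qf (Lᴴ * Q.1 * L) v.1) / ENNReal.ofReal (qf (V Q.1) v.1)

/-- Spectral radius of a linear endomorphism of matrix space: the largest modulus of an
eigenvalue. -/
def specRad {N : ℕ} (f : Module.End ℂ (Mat N)) : ℝ :=
  sSup {r : ℝ | ∃ μ : ℂ, f.HasEigenvalue μ ∧ r = ‖μ‖}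

open scoped MatrixOrder in
theorem exists_factor {N : ℕ} {B : Mat N} (hB : B.PosDef) :
    ∃ C K : Mat N, C * K = 1 ∧ K * C = 1 ∧ B = Cᴴ * C := by
  obtain ⟨C, hC⟩ := CStarAlgebra.nonneg_iff_eq_star_mul_self.mp hB.posSemidef.nonneg
  have hu : IsUnit C.det := by
    have h1 : IsUnit B.det := (Matrix.isUnit_iff_isUnit_det B).mp hB.isUnit
    rw [hC, Matrix.det_mul] at h1
    exact isUnit_of_mul_isUnit_right h1
  exact ⟨C, C⁻¹, Matrix.mul_nonsing_inv C hu, Matrix.nonsing_inv_mul C hu, hC⟩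

theorem pencil_eig {N : ℕ} {X B C K : Mat N} (hCK : C * K = 1) (hKC : K * C = 1)
    (hB : B = Cᴴ * C) (hY : (Kᴴ * X * K).IsHermitian) (i : Fin N) :
    ∃ v : Fin N → ℂ, v ≠ 0 ∧ X *ᵥ v = ((hY.eigenvalues i : ℝ) : ℂ) • (B *ᵥ v) := by
  have h := hY.mulVec_eigenvectorBasis i
  have hne : (⇑(hY.eigenvectorBasis i) : Fin N → ℂ) ≠ 0 := by
    intro h0
    apply hY.eigenvectorBasis.orthonormal.ne_zero i
    ext j
    exact congrFun h0 j
  generalize (⇑(hY.eigenvectorBasis i) : Fin N → ℂ) = w at h hne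
  have hw : C *ᵥ (K *ᵥ w) = w := by rw [Matrix.mulVec_mulVec, hCK, Matrix.one_mulVec]
  refine ⟨K *ᵥ w, ?_, ?_⟩
  · intro h0
    rw [h0, Matrix.mulVec_zero] at hw
    exact hne hw.symm
  · have hCK' : Cᴴ * Kᴴ = 1 := by rw [← Matrix.conjTranspose_mul, hKC, Matrix.conjTranspose_one]
    have h2 := congrArg (fun z => Cᴴ *ᵥ z) h
    simp only [Matrix.mulVec_mulVec] at h2
    rw [← Matrix.mul_assoc, ← Matrix.mul_assoc, hCK', Matrix.one_mul] at h2
    rw [hB, ← Matrix.mulVec_mulVec, hw, Matrix.mulVec_mulVec, h2]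
    rw [← Matrix.mulVec_smul]
    rfl

theorem pencil_exists {N : ℕ} (hN : 0 < N) {X B : Mat N} (hX : X.IsHermitian) (hB : B.PosDef) :
    ∃ (t : ℝ) (v : Fin N → ℂ), v ≠ 0 ∧ X *ᵥ v = (t : ℂ) • (B *ᵥ v) := by
  obtain ⟨C, K, h1, h2, h3⟩ := exists_factor hB
  exact ⟨_, pencil_eig h1 h2 h3 (Matrix.isHermitian_conjTranspose_mul_mul K hX) ⟨0, hN⟩⟩

theorem pencil_psd {N : ℕ} {X B : Mat N} (hX : X.IsHermitian) (hB : B.PosDef)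
    (h : ∀ (t : ℝ) (v : Fin N → ℂ), v ≠ 0 → X *ᵥ v = (t : ℂ) • (B *ᵥ v) → 0 ≤ t) :
    X.PosSemidef := by
  obtain ⟨C, K, h1, h2, h3⟩ := exists_factor hB
  have hY := Matrix.isHermitian_conjTranspose_mul_mul K hX
  have hp : (Kᴴ * X * K).PosSemidef := by
    rw [hY.posSemidef_iff_eigenvalues_nonneg]
    intro i
    obtain ⟨v, hv, hv'⟩ := pencil_eig h1 h2 h3 hY i
    exact h _ v hv hv'
  have := hp.conjTranspose_mul_mul_same C
  have e : Cᴴ * (Kᴴ * X * K) * C = X := by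
    have hCK' : Cᴴ * Kᴴ = 1 := by rw [← Matrix.conjTranspose_mul, h2, Matrix.conjTranspose_one]
    rw [Matrix.mul_assoc, Matrix.mul_assoc, Matrix.mul_assoc, h2, Matrix.mul_one,
      ← Matrix.mul_assoc, hCK', Matrix.one_mul]
  rwa [e] at this

theorem pencil_finite {N : ℕ} (X : Mat N) {B : Mat N} (hB : B.PosDef) :
    Set.Finite {t : ℝ | ∃ v : Fin N → ℂ, v ≠ 0 ∧ X *ᵥ v = (t : ℂ) • (B *ᵥ v)} := by
  have hu : IsUnit B.det := (Matrix.isUnit_iff_isUnit_det B).mp hB.isUnit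
  have hf := (Module.End.finite_hasEigenvalue (Matrix.toLin' (B⁻¹ * X))).preimage
    (f := fun t : ℝ => (t : ℂ)) (Complex.ofReal_injective.injOn)
  refine hf.subset ?_
  rintro t ⟨v, hv, h⟩
  refine Module.End.hasEigenvalue_of_hasEigenvector (x := v) ?_
  rw [Module.End.hasEigenvector_iff, Module.End.mem_eigenspace_iff]
  refine ⟨?_, hv⟩
  rw [Matrix.toLin'_apply, ← Matrix.mulVec_mulVec, h, Matrix.mulVec_smul, Matrix.mulVec_mulVec,
    Matrix.nonsing_inv_mul B hu, Matrix.one_mulVec]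

theorem real_smul_herm {N : ℕ} {A : Mat N} (hA : A.IsHermitian) (r : ℝ) :
    ((r : ℂ) • A).IsHermitian := by
  unfold Matrix.IsHermitian
  rw [Matrix.conjTranspose_smul, hA.eq]
  simp

theorem real_smul_psd {N : ℕ} {A : Mat N} (hA : A.PosSemidef) {r : ℝ} (hr : 0 ≤ r) :
    ((r : ℂ) • A).PosSemidef :=
  hA.smul (by exact_mod_cast hr)

theorem pencil_lower {N : ℕ} {X B : Mat N} (hX : X.IsHermitian) (hB : B.PosDef) {l : ℝ}
    (hl : ∀ t ∈ {t : ℝ | ∃ v : Fin N → ℂ, v ≠ 0 ∧ X *ᵥ v = (t : ℂ) • (B *ᵥ v)}, l ≤ t) :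
    (X - (l : ℂ) • B).PosSemidef := by
  refine pencil_psd (hX.sub (real_smul_herm hB.1 l)) hB fun t v hv h => ?_
  have := hl (t + l) ⟨v, hv, ?_⟩
  · linarith
  · rw [Matrix.sub_mulVec, Matrix.smul_mulVec, sub_eq_iff_eq_add] at h
    rw [h]; push_cast; rw [add_smul]

theorem pencil_upper {N : ℕ} {X B : Mat N} (hX : X.IsHermitian) (hB : B.PosDef) {l : ℝ}
    (hl : ∀ t ∈ {t : ℝ | ∃ v : Fin N → ℂ, v ≠ 0 ∧ X *ᵥ v = (t : ℂ) • (B *ᵥ v)}, t ≤ l) :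
    ((l : ℂ) • B - X).PosSemidef := by
  refine pencil_psd ((real_smul_herm hB.1 l).sub hX) hB fun t v hv h => ?_
  have := hl (l - t) ⟨v, hv, ?_⟩
  · linarith
  · rw [Matrix.sub_mulVec, Matrix.smul_mulVec, sub_eq_iff_eq_add, ← sub_eq_iff_eq_add'] at h
    rw [← h]; push_cast; rw [sub_smul]

theorem qf_nonneg {N : ℕ} {A : Mat N} (hA : A.PosSemidef) (v : Fin N → ℂ) : 0 ≤ qf A v :=
  hA.re_dotProduct_nonneg v

theorem qf_pos {N : ℕ} {A : Mat N} (hA : A.PosDef) {v : Fin N → ℂ} (hv : v ≠ 0) : 0 < qf A v :=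
  hA.re_dotProduct_pos hv

theorem qf_sub {N : ℕ} (A B : Mat N) (v : Fin N → ℂ) : qf (A - B) v = qf A v - qf B v := by
  simp [qf, Matrix.sub_mulVec]

theorem qf_smul {N : ℕ} (r : ℝ) (B : Mat N) (v : Fin N → ℂ) :
    qf ((r : ℂ) • B) v = r * qf B v := by
  simp [qf, Matrix.smul_mulVec]

theorem psd_of_qf {N : ℕ} {A : Mat N} (hA : A.IsHermitian) (h : ∀ v, v ≠ 0 → 0 ≤ qf A v) :
    A.PosSemidef := by
  refine Matrix.PosSemidef.of_dotProduct_mulVec_nonneg hA fun v => ?_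
  by_cases hv : v = 0
  · simp [hv]
  · rw [Complex.nonneg_iff]
    exact ⟨h v hv, (hA.im_star_dotProduct_mulVec_self v).symm⟩

theorem Smap_psd {N : ℕ} (L : Mat N) (V : Mat N →ₗ[ℂ] Mat N)
    (hVpsd : ∀ Q : Mat N, Q.PosSemidef → (V Q).PosSemidef) {A : Mat N} (hA : A.PosSemidef) :
    (Smap L V A).PosSemidef :=
  hVpsd _ (hA.conjTranspose_mul_mul_same L⁻¹)

theorem Smap_conj {N : ℕ} {L : Mat N} (hL : IsUnit L) (V : Mat N →ₗ[ℂ] Mat N) (R : Mat N) :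
    Smap L V (Lᴴ * R * L) = V R := by
  have hd := (Matrix.isUnit_iff_isUnit_det L).mp hL
  change V (L⁻¹ᴴ * (Lᴴ * R * L) * L⁻¹) = V R
  congr 1
  have h1 : L⁻¹ᴴ * Lᴴ = 1 := by
    rw [← Matrix.conjTranspose_mul, Matrix.mul_nonsing_inv L hd, Matrix.conjTranspose_one]
  rw [Matrix.mul_assoc, Matrix.mul_assoc, Matrix.mul_assoc, Matrix.mul_nonsing_inv L hd,
    Matrix.mul_one, ← Matrix.mul_assoc, h1, Matrix.one_mul]

theorem congr_by_inv_cancel {N : ℕ} {L : Mat N} (hL : IsUnit L) (Q : Mat N) :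
    Lᴴ * (L⁻¹ᴴ * Q * L⁻¹) * L = Q := by
  have hd := (Matrix.isUnit_iff_isUnit_det L).mp hL
  have h1 : Lᴴ * L⁻¹ᴴ = 1 := by
    rw [← Matrix.conjTranspose_mul, Matrix.nonsing_inv_mul L hd, Matrix.conjTranspose_one]
  rw [Matrix.mul_assoc, Matrix.mul_assoc, Matrix.mul_assoc, Matrix.nonsing_inv_mul L hd,
    Matrix.mul_one, ← Matrix.mul_assoc, h1, Matrix.one_mul]

/-- The iteration argument: no `c > M` can satisfy `T ⪰ c S[T]`. -/
theorem no_gap {N : ℕ} (hN : 0 < N) (S : Module.End ℂ (Mat N))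
    (hS : ∀ A : Mat N, A.PosSemidef → (S A).PosSemidef) {Q T : Mat N} (hQ : Q.PosSemidef)
    (hSQ : (S Q).PosDef) (hT : T.PosDef) {M c : ℝ} (hM : ((M : ℂ) • S Q - Q).PosSemidef)
    (hc : (T - (c : ℂ) • S T).PosSemidef) (hMc : M < c) : False := by
  have hex : ∃ v, v ≠ 0 ∧ 0 < qf Q v := by
    by_contra! hcon
    have hneg : (-Q).PosSemidef := by
      refine psd_of_qf hQ.1.neg fun v hv => ?_
      have h1 := hcon v hv
      have h2 := qf_sub 0 Q v
      rw [zero_sub] at h2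
      rw [h2]
      have : qf (0 : Mat N) v = 0 := by simp [qf]
      linarith
    have h1 := hS _ hneg
    have hv : (fun _ => 1 : Fin N → ℂ) ≠ 0 := fun h => by
      simpa using congrFun h ⟨0, hN⟩
    have h2 := qf_nonneg h1 (fun _ => 1)
    have h3 := qf_pos hSQ hv
    have h4 := qf_sub 0 (S Q) (fun _ => 1)
    rw [zero_sub, ← map_neg] at h4
    have : qf (0 : Mat N) (fun _ => 1) = 0 := by simp [qf]
    linarith
  obtain ⟨v, hv, hvQ⟩ := hex
  have hM0 : 0 < M := by
    have h1 := qf_nonneg hM v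
    rw [qf_sub, qf_smul] at h1
    have h2 := qf_pos hSQ hv
    by_contra! hle
    nlinarith
  have hc0 : 0 < c := hM0.trans hMc
  -- starting value
  obtain ⟨s, hs0, hs⟩ : ∃ s : ℝ, 0 < s ∧ (T - (s : ℂ) • Q).PosSemidef := by
    obtain ⟨b, hb⟩ := (pencil_finite Q hT).bddAbove
    have hp := pencil_upper hQ.1 hT (l := max b 1) fun t ht => (hb ht).trans (le_max_left _ _)
    have hm : 0 < max b 1 := lt_of_lt_of_le one_pos (le_max_right _ _)
    refine ⟨(max b 1)⁻¹, inv_pos.mpr hm, ?_⟩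
    have := real_smul_psd hp (inv_pos.mpr hm).le
    rwa [smul_sub, smul_smul, ← Complex.ofReal_mul, inv_mul_cancel₀ hm.ne', Complex.ofReal_one,
      one_smul] at this
  have step : ∀ n : ℕ, (T - (((c / M) ^ n * s : ℝ) : ℂ) • Q).PosSemidef := by
    intro n
    induction n with
    | zero => simpa using hs
    | succ n ih =>
      set r : ℝ := (c / M) ^ n * s with hr
      have hr0 : 0 < r := by positivity
      refine psd_of_qf (hT.1.sub (real_smul_herm hQ.1 _)) fun w _ => ?_
      have h1 := qf_nonneg (hS _ ih) w
      rw [map_sub, map_smul, qf_sub, qf_smul] at h1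
      have h2 := qf_nonneg hc w
      have h3 := qf_nonneg hM w
      rw [qf_sub, qf_smul] at h2 h3
      rw [qf_sub, qf_smul]
      have e : (c / M) ^ (n + 1) * s = c * r / M := by rw [hr]; ring
      rw [e]
      have h4 : c * r / M * qf Q w ≤ c * r / M * (M * qf (S Q) w) :=
        mul_le_mul_of_nonneg_left (by linarith) (by positivity)
      have h5 : c * r / M * (M * qf (S Q) w) = c * (r * qf (S Q) w) := by field_simp
      have h6 : c * (r * qf (S Q) w) ≤ c * qf (S T) w :=
        mul_le_mul_of_nonneg_left (by linarith) hc0.le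
      linarith
  have hgt : 1 < c / M := (one_lt_div hM0).mpr hMc
  obtain ⟨n, hn⟩ := pow_unbounded_of_one_lt (qf T v / (s * qf Q v)) hgt
  have h1 := qf_nonneg (step n) v
  rw [qf_sub, qf_smul] at h1
  rw [div_lt_iff₀ (by positivity)] at hn
  linarith

/-- for `Q ⪰ 0` with `𝒮[Q] ≻ 0`, the generalized spectrum
`σ_Q = { t ∈ ℝ : ∃ v ≠ 0, Q v = t·𝒮[Q] v }` is a nonempty finite set of reals and
`min σ_Q ≤ P ≤ max σ_Q` (in particular `P` is finite). -/
theorem stmt3 {N : ℕ} (hN : 0 < N) (L : Mat N) (hL : IsUnit L)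
    (V : Mat N →ₗ[ℂ] Mat N)
    (hVherm : ∀ Q : Mat N, Q.IsHermitian → (V Q).IsHermitian)
    (hVpsd : ∀ Q : Mat N, Q.PosSemidef → (V Q).PosSemidef)
    (Q : Mat N) (hQ : Q.PosSemidef) (hSQ : ((Smap L V) Q).PosDef) :
    Set.Finite {t : ℝ | ∃ v : Fin N → ℂ, v ≠ 0 ∧ Q *ᵥ v = (t : ℂ) • ((Smap L V) Q *ᵥ v)} ∧
    Set.Nonempty {t : ℝ | ∃ v : Fin N → ℂ, v ≠ 0 ∧ Q *ᵥ v = (t : ℂ) • ((Smap L V) Q *ᵥ v)} ∧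
    ENNReal.ofReal
        (sInf {t : ℝ | ∃ v : Fin N → ℂ, v ≠ 0 ∧ Q *ᵥ v = (t : ℂ) • ((Smap L V) Q *ᵥ v)})
      ≤ Pval L V ∧
    Pval L V ≤ ENNReal.ofReal
        (sSup {t : ℝ | ∃ v : Fin N → ℂ, v ≠ 0 ∧ Q *ᵥ v = (t : ℂ) • ((Smap L V) Q *ᵥ v)}) := by
  have hfin := pencil_finite Q hSQ
  have hne : Set.Nonempty {t : ℝ | ∃ v : Fin N → ℂ, v ≠ 0 ∧
      Q *ᵥ v = (t : ℂ) • ((Smap L V) Q *ᵥ v)} := pencil_exists hN hQ.1 hSQ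
  refine ⟨hfin, hne, ?_, ?_⟩
  · have hlow := pencil_lower hQ.1 hSQ fun t ht => csInf_le hfin.bddBelow ht
    generalize sInf {t : ℝ | ∃ v : Fin N → ℂ, v ≠ 0 ∧
      Q *ᵥ v = (t : ℂ) • ((Smap L V) Q *ᵥ v)} = l at hlow
    rcases le_or_gt l 0 with hl | hl
    · rw [ENNReal.ofReal_of_nonpos hl]
      exact zero_le
    have hq : ∀ v, l * qf (Smap L V Q) v ≤ qf Q v := fun v => by
      have := qf_nonneg hlow v
      rw [qf_sub, qf_smul] at this
      linarith
    have hlB : ((l : ℂ) • Smap L V Q).PosDef := hSQ.smul (by exact_mod_cast hl)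
    have hQpd : Q.PosDef := by
      have := hlB.add_posSemidef hlow
      rwa [add_sub_cancel] at this
    have hd := (Matrix.isUnit_iff_isUnit_det L).mp hL
    have hR : (L⁻¹ᴴ * Q * L⁻¹).PosDef :=
      hQpd.conjTranspose_mul_mul_same (Matrix.mulVec_injective_of_isUnit
        ((Matrix.isUnit_nonsing_inv_iff).mpr hL))
    refine le_iSup_of_le ⟨_, hR⟩ (le_iInf fun v => ?_)
    change _ ≤ ENNReal.ofReal (qf (Lᴴ * (L⁻¹ᴴ * Q * L⁻¹) * L) v.1) /
      ENNReal.ofReal (qf (Smap L V Q) v.1)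
    rw [congr_by_inv_cancel hL]
    have hpos := qf_pos hSQ v.2
    rw [← ENNReal.ofReal_div_of_pos hpos]
    exact ENNReal.ofReal_le_ofReal ((le_div_iff₀ hpos).mpr (hq v.1))
  · have hup := pencil_upper hQ.1 hSQ fun t ht => le_csSup hfin.bddAbove ht
    generalize sSup {t : ℝ | ∃ v : Fin N → ℂ, v ≠ 0 ∧
      Q *ᵥ v = (t : ℂ) • ((Smap L V) Q *ᵥ v)} = M at hup
    refine iSup_le fun R => ?_
    by_contra! hlt
    obtain ⟨c, hMc, hc⟩ := ENNReal.lt_iff_exists_nnreal_btwn.mp hlt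
    have hMc' : M < (c : ℝ) := by
      rw [← ENNReal.ofReal_coe_nnreal] at hMc
      exact (ENNReal.ofReal_lt_ofReal_iff'.mp hMc).1
    have hT : (Lᴴ * R.1 * L).PosDef :=
      R.2.conjTranspose_mul_mul_same (Matrix.mulVec_injective_of_isUnit hL)
    refine no_gap hN (Smap L V) (fun A hA => Smap_psd L V hVpsd hA) hQ hSQ hT hup (c := c) ?_ hMc'
    rw [Smap_conj hL]
    have hVR := hVpsd _ R.2.posSemidef
    refine psd_of_qf (hT.1.sub (real_smul_herm hVR.1 _)) fun v hv => ?_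
    rw [qf_sub, qf_smul]
    have h1 := hc.le.trans (iInf_le _ ⟨v, hv⟩)
    have h2 := ENNReal.mul_le_of_le_div h1
    rw [← ENNReal.ofReal_coe_nnreal, ← ENNReal.ofReal_mul c.coe_nonneg,
      ENNReal.ofReal_le_ofReal_iff (qf_pos hT hv).le] at h2
    linarith

end
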